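/- There exists γ₀ > 0 such that for every real γ with 0 < γ ≤ γ₀ and every positive integer n for which (1−γ)n is an even integer, every independent set S of the Frankl–Rödl graph FRⁿ_γ satisfies |S| ≤ n·(1 − γ²/64)ⁿ · 2ⁿ. -/

import Mathlib

/-!
The proof reduces the forbidden distance to a forbidden intersection size. By averaging, some
translate of `S` has at least `|S| / n` points in the middle layer of the cube. Two points `f`, `g`
of weight `⌊n / 2⌋` are at distance `2 ⌊n / 2⌋ - 2 |f ∩ g|`, so, `d` being even, these points form
a family with no intersection of size `l = ⌊n / 2⌋ - d / 2`, where `l` is about `γ n / 2`.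

The bound for families `A`, `B` with a single forbidden size `l` is proved by induction on `n` for
a forbidden interval `[p, q)` of sizes (`card_mul_card_le`). Write `A₀`, `A₁`, `B₀`, `B₁` for the
slices by one coordinate. The pairs `(A₀ ∪ A₁, B₀)` and `(A₀, B₀ ∪ B₁)` avoid `[p, q)`; the pairs
`(A₀ ∩ A₁, B₁)` and `(A₁, B₀ ∩ B₁)` avoid the wider interval `[p - 1, q)`; and `(A₁, B₁)` avoids
`[p - 1, q - 1)`. If `A₀` and `A₁` nearly agree and `B₀` and `B₁` have nearly equal sizes, then
`|A₀ ∪ A₁| |B₀|` and `|A₀ ∩ A₁| |B₁|` are both close to `|A| |B| / 4` and widening is almost free;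
otherwise, unless a union gives a gain, `A₁` and `B₁` are both noticeably larger than half of `A`
and `B`, and `(A₁, B₁)` gives a gain that pays for the shift (`half_step`, `step_of_gap`). Widening
costs order `x²` and happens at most `l` times, so its total cost `x² l` is of lower order than the
gain `x² n / 4` when `x = γ` is small.

Once `p = 0`, all intersections have size at least `q`, and the exponential-moment form of
concentration of measure on the cube applies (`card_mul_card_le_of_le_interCard`).
-/

/-! ### Intersections and slices of families of sets -/

/-- The number of coordinates on which both `f` and `g` are `true`: the size of the intersection
of the subsets with indicator functions `f` and `g`. -/
def interCard {n : ℕ} (f g : Fin n → Bool) : ℕ :=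
  (Finset.univ.filter fun i => f i = true ∧ g i = true).card

/-- The slice of the family `A` consisting of the vectors whose extension by a zeroth coordinate
`e` belongs to `A`. -/
def slice {n : ℕ} (A : Finset (Fin (n + 1) → Bool)) (e : Bool) : Finset (Fin n → Bool) :=
  Finset.univ.filter fun f => (Fin.cons e f : Fin (n + 1) → Bool) ∈ A

lemma mem_slice {n : ℕ} {A : Finset (Fin (n + 1) → Bool)} {e : Bool} {f : Fin n → Bool} :
    f ∈ slice A e ↔ (Fin.cons e f : Fin (n + 1) → Bool) ∈ A := by
  simp [slice]

lemma card_slice_add {n : ℕ} (A : Finset (Fin (n + 1) → Bool)) :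
    (slice A false).card + (slice A true).card = A.card := by
  have key : ∀ e, (slice A e).card = (A.filter fun f => f 0 = e).card := by
    intro e
    refine Finset.card_bij (fun f _ => Fin.cons e f) ?_ ?_ ?_
    · intro f hf
      simpa [mem_slice] using hf
    · intro f _ g _ h
      exact Fin.cons_right_injective (α := fun _ => Bool) e h
    · intro f hf
      obtain ⟨h1, h2⟩ := Finset.mem_filter.1 hf
      refine ⟨Fin.tail f, ?_, ?_⟩
      · rw [mem_slice, ← h2, Fin.cons_self_tail]; exact h1
      · rw [← h2, Fin.cons_self_tail]
  rw [key, key, ← Finset.card_filter_add_card_filter_not (s := A) (fun f => f 0 = false)]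
  simp

lemma interCard_cons {n : ℕ} (e e' : Bool) (f g : Fin n → Bool) :
    interCard (Fin.cons e f : Fin (n + 1) → Bool) (Fin.cons e' g) =
      (e && e').toNat + interCard f g := by
  simp only [interCard, Fin.card_filter_univ_succ]
  cases e <;> cases e' <;> simp [add_comm]

lemma card_le_two_pow {n : ℕ} (A : Finset (Fin n → Bool)) : (A.card : ℝ) ≤ 2 ^ n := by
  have := Finset.card_le_univ A
  simp at this
  exact_mod_cast this

/-! ### Families with all cross intersections large -/

/-- The real inequality behind the induction step of `card_mul_card_le_of_le_interCard`. -/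
lemma step_of_le {x M a0 a1 b0 b1 : ℝ} (hx : 0 ≤ x) (hM : 0 < M)
    (ha1 : 0 ≤ a1) (hb0 : 0 ≤ b0)
    (h00 : a0 * b0 ≤ M) (h01 : a0 * b1 ≤ M) (h10 : a1 * b0 ≤ M)
    (h11 : a1 * b1 ≤ Real.exp x * M) :
    (a0 + a1) * (b0 + b1) ≤ 4 * (Real.exp (x ^ 2 / 4) * M) := by
  have hprod : (a0 * b0) * (a1 * b1) ≤ M ^ 2 := by
    calc (a0 * b0) * (a1 * b1) = (a0 * b1) * (a1 * b0) := by ring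
      _ ≤ M * M := mul_le_mul h01 h10 (by positivity) hM.le
      _ = M ^ 2 := by ring
  have hcosh : 2 + Real.exp x + Real.exp (-x) ≤ 4 * Real.exp (x ^ 2 / 4) := by
    have h1 := Real.cosh_le_exp_half_sq (x / 2)
    have h2 : Real.cosh x = 2 * Real.cosh (x / 2) ^ 2 - 1 := by
      have h3 := Real.cosh_two_mul (x / 2)
      have h4 := Real.cosh_sq (x / 2)
      rw [show 2 * (x / 2) = x by ring] at h3
      linarith
    have h5 : Real.exp (x ^ 2 / 4) = Real.exp ((x / 2) ^ 2 / 2) ^ 2 := by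
      rw [← Real.exp_nat_mul]; congr 1; push_cast; ring
    have h6 : Real.cosh (x / 2) ^ 2 ≤ Real.exp ((x / 2) ^ 2 / 2) ^ 2 :=
      pow_le_pow_left₀ (Real.cosh_pos _).le h1 2
    have h7 := Real.cosh_eq x
    rw [h5]
    linarith
  have hE : 1 ≤ Real.exp x := Real.one_le_exp hx
  have hinv : Real.exp x * Real.exp (-x) = 1 := by rw [← Real.exp_add]; simp
  set u := a0 * b0
  set v := a1 * b1
  -- `u + v` is largest at the endpoint `v = exp x * M`, `u = exp (-x) * M`.
  have huv : u + v ≤ (Real.exp x + Real.exp (-x)) * M := by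
    have hF : 0 < Real.exp (-x) := Real.exp_pos _
    generalize Real.exp x = y at *
    generalize Real.exp (-x) = z at *
    rcases le_total v M with hv | hv
    · have : 2 ≤ y + z := by nlinarith [sq_nonneg (y - 1)]
      nlinarith
    · have hv0 : 0 < v := by linarith
      have h1 : 0 ≤ (y * M - v) * (v - z * M) :=
        mul_nonneg (by linarith) (by nlinarith)
      have h2 : (u + v) * v ≤ ((y + z) * M) * v := by nlinarith
      exact le_of_mul_le_mul_right h2 hv0
  nlinarith

/-- If all cross intersections have size at least `q`, the product of the two densities is at most
`exp (x² n / 4 - x q)`, for every `x ≥ 0`. This is the case in which the forbidden interval of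
intersection sizes starts at `0`. -/
lemma card_mul_card_le_of_le_interCard {x : ℝ} (hx : 0 ≤ x) (n : ℕ) :
    ∀ (q : ℕ) (A B : Finset (Fin n → Bool)), (∀ f ∈ A, ∀ g ∈ B, q ≤ interCard f g) →
      (A.card : ℝ) * B.card ≤ 4 ^ n * Real.exp (x ^ 2 / 4 * n - x * q) := by
  have triv : ∀ (n : ℕ) (A B : Finset (Fin n → Bool)),
      (A.card : ℝ) * B.card ≤ 4 ^ n * Real.exp (x ^ 2 / 4 * n - x * (0 : ℕ)) := by
    intro n A B
    have h1 : (1 : ℝ) ≤ Real.exp (x ^ 2 / 4 * n - x * (0 : ℕ)) :=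
      Real.one_le_exp (by simp; positivity)
    calc (A.card : ℝ) * B.card ≤ 2 ^ n * 2 ^ n :=
          mul_le_mul (card_le_two_pow A) (card_le_two_pow B) (by positivity) (by positivity)
      _ = 4 ^ n := by rw [← mul_pow]; norm_num
      _ ≤ _ := le_mul_of_one_le_right (by positivity) h1
  induction n with
  | zero =>
    intro q A B h
    rcases A.eq_empty_or_nonempty with rfl | ⟨f, hf⟩
    · simp [Real.exp_nonneg]
    rcases B.eq_empty_or_nonempty with rfl | ⟨g, hg⟩
    · simp [Real.exp_nonneg]
    have h0 := h f hf g hg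
    obtain rfl : q = 0 := by simpa [interCard] using h0
    exact triv 0 A B
  | succ n ih =>
    intro q A B h
    rcases q with _ | q
    · exact triv (n + 1) A B
    have hs : ∀ e e' : Bool, ∀ f ∈ slice A e, ∀ g ∈ slice B e',
        q + 1 ≤ (e && e').toNat + interCard f g := by
      intro e e' f hf g hg
      rw [← interCard_cons]
      exact h _ (mem_slice.1 hf) _ (mem_slice.1 hg)
    set M : ℝ := 4 ^ n * Real.exp (x ^ 2 / 4 * n - x * (q + 1 : ℕ)) with hM
    have hMpos : 0 < M := by positivity
    have h00 := ih (q + 1) (slice A false) (slice B false)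
      (fun f hf g hg => by simpa using hs false false f hf g hg)
    have h01 := ih (q + 1) (slice A false) (slice B true)
      (fun f hf g hg => by simpa using hs false true f hf g hg)
    have h10 := ih (q + 1) (slice A true) (slice B false)
      (fun f hf g hg => by simpa using hs true false f hf g hg)
    have h11 := ih q (slice A true) (slice B true)
      (fun f hf g hg => by have := hs true true f hf g hg; simp at this; omega)
    have h11' : ((slice A true).card : ℝ) * (slice B true).card ≤ Real.exp x * M := by
      refine h11.trans (le_of_eq ?_)
      rw [hM, mul_left_comm, ← Real.exp_add]
      push_cast
      ring_nf
    have key := step_of_le hx hMpos (by positivity) (by positivity) h00 h01 h10 h11'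
    rw [← card_slice_add A, ← card_slice_add B]
    push_cast
    refine key.trans (le_of_eq ?_)
    rw [hM, mul_left_comm (Real.exp _), ← Real.exp_add]
    push_cast
    ring_nf

/-! ### Families with a forbidden interval of intersection sizes -/

/-- One half of the induction step: if neither keeping nor widening the forbidden interval gives a
gain, then the upper slice `b1` exceeds the mean `b` by a factor at least `1 + x`. -/
lemma half_step {x M a b au ai b0 b1 : ℝ} (hx : 0 < x) (hx' : x ≤ 1 / 5)
    (ha : 0 < a) (hb : 0 < b) (hai : 0 ≤ ai) (hau : ai ≤ au) (hb0 : 0 ≤ b0) (hb1 : 0 ≤ b1)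
    (hsa : au + ai = 2 * a) (hsb : b0 + b1 = 2 * b)
    (hlt : Real.exp (-(x ^ 2 / 4)) * M < a * b)
    (h1 : au * b0 ≤ M) (h2 : ai * b1 ≤ Real.exp (-(33 / 2 * x ^ 2)) * M) :
    (1 + x) * b ≤ b1 := by
  obtain ⟨s, hs⟩ : ∃ s, s * a = au - a := ⟨(au - a) / a, by field_simp⟩
  obtain ⟨β, hβ⟩ : ∃ β, β * b = b1 - b := ⟨(b1 - b) / b, by field_simp⟩
  have eau : au = (1 + s) * a := by linarith
  have eai : ai = (1 - s) * a := by linarith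
  have eb1 : b1 = (1 + β) * b := by linarith
  have eb0 : b0 = (1 - β) * b := by linarith
  have hs0 : 0 ≤ s := by by_contra! hc; nlinarith
  have hs1 : 0 ≤ 1 - s := by by_contra! hc; nlinarith
  have hβ1 : 0 ≤ 1 - β := by by_contra! hc; nlinarith
  have hβ0 : 0 ≤ 1 + β := by by_contra! hc; nlinarith
  have hab : 0 < a * b := mul_pos ha hb
  have hM' : M < Real.exp (x ^ 2 / 4) * (a * b) := by
    have := mul_lt_mul_of_pos_left hlt (Real.exp_pos (x ^ 2 / 4))
    rwa [← mul_assoc, ← Real.exp_add, add_neg_cancel, Real.exp_zero, one_mul] at this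
  have hq : x ^ 2 ≤ 1 / 25 := by nlinarith
  have hT : Real.exp (x ^ 2 / 4) ≤ 1 + x ^ 2 / 2 := by
    have := Real.exp_bound_div_one_sub_of_interval (x := x ^ 2 / 4) (by positivity) (by nlinarith)
    refine this.trans ?_
    rw [div_le_iff₀ (by nlinarith)]
    nlinarith [mul_nonneg (sq_nonneg x) (show 0 ≤ 1 - x ^ 2 by linarith)]
  have k1 : (1 + s) * (1 - β) < Real.exp (x ^ 2 / 4) := by
    have : (1 + s) * (1 - β) * (a * b) < Real.exp (x ^ 2 / 4) * (a * b) := by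
      refine lt_of_le_of_lt (le_trans (le_of_eq ?_) h1) hM'
      rw [eau, eb0]; ring
    exact lt_of_mul_lt_mul_right this hab.le
  have k2 : (1 - s) * (1 + β) ≤ Real.exp (-(33 / 2 * x ^ 2)) * Real.exp (x ^ 2 / 4) := by
    have : (1 - s) * (1 + β) * (a * b) ≤
        Real.exp (-(33 / 2 * x ^ 2)) * Real.exp (x ^ 2 / 4) * (a * b) := by
      rw [mul_assoc (Real.exp _)]
      refine le_trans (le_trans (le_of_eq ?_) h2)
        (mul_le_mul_of_nonneg_left hM'.le (Real.exp_pos _).le)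
      rw [eai, eb1]; ring
    exact le_of_mul_le_mul_right this hab
  by_contra! hc
  have hβx : β < x := by
    rw [eb1] at hc
    have := lt_of_mul_lt_mul_right hc hb.le
    linarith
  have hs2 : s < 2 * x := by
    by_contra! h
    nlinarith [mul_le_mul (show 1 + 2 * x ≤ 1 + s by linarith) (show 1 - x ≤ 1 - β by linarith)
      (by linarith) (by linarith)]
  have hβ2 : -(2 * x) < β := by
    by_contra! h
    nlinarith [mul_nonneg hs0 hβ1]
  have hprod : ((1 + s) * (1 - β)) * ((1 - s) * (1 + β)) ≤ Real.exp (-(16 * x ^ 2)) := by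
    calc _ ≤ Real.exp (x ^ 2 / 4) *
          (Real.exp (-(33 / 2 * x ^ 2)) * Real.exp (x ^ 2 / 4)) :=
          mul_le_mul k1.le k2 (by positivity) (Real.exp_pos _).le
      _ = Real.exp (-(16 * x ^ 2)) := by
          rw [← Real.exp_add, ← Real.exp_add]; congr 1; ring
  have hexp : Real.exp (-(16 * x ^ 2)) ≤ 1 - 8 * x ^ 2 := by
    rw [Real.exp_neg, inv_le_comm₀ (Real.exp_pos _) (by linarith)]
    refine le_trans ?_ (Real.add_one_le_exp _)
    rw [inv_eq_one_div, div_le_iff₀ (by linarith)]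
    linarith [mul_nonneg (sq_nonneg x) (show 0 ≤ 1 - 16 * x ^ 2 by linarith)]
  have hs4 : s ^ 2 < 4 * x ^ 2 := by
    have := sq_lt_sq' (by linarith) hs2
    linarith [mul_pow 2 x 2]
  have hβ4 : β ^ 2 < 4 * x ^ 2 := by
    have := sq_lt_sq' hβ2 (show β < 2 * x by linarith)
    linarith [mul_pow 2 x 2]
  have huv : 0 ≤ s ^ 2 * β ^ 2 := by positivity
  have hring : ((1 + s) * (1 - β)) * ((1 - s) * (1 + β)) = 1 - s ^ 2 - β ^ 2 + s ^ 2 * β ^ 2 := by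
    ring
  rw [hring] at hprod
  linarith

/-- The real inequality behind the induction step of `card_mul_card_le`. -/
lemma step_of_gap {x M a0 a1 au ai b0 b1 bu bi : ℝ} (hx : 0 < x) (hx' : x ≤ 1 / 5) (hM : 0 < M)
    (ha0 : 0 ≤ a0) (ha1 : 0 ≤ a1) (hai : 0 ≤ ai) (hau : ai ≤ au)
    (hb0 : 0 ≤ b0) (hb1 : 0 ≤ b1) (hbi : 0 ≤ bi) (hbu : bi ≤ bu)
    (hsa : au + ai = a0 + a1) (hsb : bu + bi = b0 + b1)
    (h1 : au * b0 ≤ M) (h2 : a0 * bu ≤ M)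
    (h3 : a1 * bi ≤ Real.exp (-(33 / 2 * x ^ 2)) * M)
    (h4 : ai * b1 ≤ Real.exp (-(33 / 2 * x ^ 2)) * M)
    (h5 : a1 * b1 ≤ Real.exp (x - 33 / 2 * x ^ 2) * M) :
    (a0 + a1) * (b0 + b1) ≤ 4 * (Real.exp (-(x ^ 2 / 4)) * M) := by
  by_contra! hc
  obtain ⟨a, ha⟩ : ∃ a, a0 + a1 = 2 * a := ⟨(a0 + a1) / 2, by ring⟩
  obtain ⟨b, hb⟩ : ∃ b, b0 + b1 = 2 * b := ⟨(b0 + b1) / 2, by ring⟩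
  have hlt : Real.exp (-(x ^ 2 / 4)) * M < a * b := by
    rw [ha, hb] at hc; linarith
  have hpos : 0 < a * b := lt_trans (by positivity) hlt
  have hapos : 0 < a := by
    rcases (show 0 ≤ a by linarith).eq_or_lt with h | h
    · rw [← h] at hpos; simp at hpos
    · exact h
  have hbpos : 0 < b := by
    rcases (show 0 ≤ b by linarith).eq_or_lt with h | h
    · rw [← h] at hpos; simp at hpos
    · exact h
  have kb := half_step hx hx' hapos hbpos hai hau hb0 hb1 (by linarith) hb hlt h1 h4
  have ka := half_step hx hx' hbpos hapos hbi hbu ha0 ha1 (by linarith) ha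
    (by rwa [mul_comm b a]) (by rwa [mul_comm]) (by rwa [mul_comm])
  have k1 : ((1 + x) * a) * ((1 + x) * b) ≤ a1 * b1 :=
    mul_le_mul ka kb (by positivity) ha1
  have k2 : Real.exp (x - 33 / 2 * x ^ 2) ≤ (1 + x) ^ 2 * Real.exp (-(x ^ 2 / 4)) := by
    have e1 : Real.exp (x - 33 / 2 * x ^ 2) ≤ Real.exp (2 * x + -(x ^ 2 / 4) - x) := by
      apply Real.exp_le_exp.2; nlinarith
    have e2 : Real.exp (2 * x + -(x ^ 2 / 4) - x) = Real.exp x * Real.exp (-(x ^ 2 / 4)) := by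
      rw [← Real.exp_add]; congr 1; ring
    have e3 : Real.exp x ≤ (1 + x) ^ 2 := by
      refine (Real.exp_bound_div_one_sub_of_interval hx.le (by linarith)).trans ?_
      rw [div_le_iff₀ (by linarith)]
      nlinarith
    rw [e2] at e1
    exact e1.trans (mul_le_mul_of_nonneg_right e3 (Real.exp_pos _).le)
  have k3 : (1 + x) ^ 2 * (Real.exp (-(x ^ 2 / 4)) * M) < (1 + x) ^ 2 * (a * b) :=
    mul_lt_mul_of_pos_left hlt (by positivity)
  have k4 := mul_le_mul_of_nonneg_right k2 hM.le
  nlinarith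

/-- If no cross intersection has size in `[p, q)`, where `p < q ≤ L` and `n x ≤ 2 L`, then the product
of the two densities is at most `exp (-(x² n / 4 + x (q - L) - (33/2) x² p))`. -/
lemma card_mul_card_le {x : ℝ} (hx : 0 < x) (hx' : x ≤ 1 / 5) (L : ℕ) (n : ℕ) :
    (n : ℝ) * x ≤ 2 * L →
    ∀ (p q : ℕ) (A B : Finset (Fin n → Bool)), p < q → q ≤ L →
      (∀ f ∈ A, ∀ g ∈ B, interCard f g < p ∨ q ≤ interCard f g) →
      (A.card : ℝ) * B.card ≤
        4 ^ n * Real.exp (-(x ^ 2 / 4 * n + x * (q - L) - 33 / 2 * x ^ 2 * p)) := by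
  -- When the forbidden interval starts at `0`, the exponent lies below a tangent line of the
  -- parabola coming from the lemma on intersections of size at least `q`.
  have base : ∀ n : ℕ, (n : ℝ) * x ≤ 2 * L → ∀ (q : ℕ) (A B : Finset (Fin n → Bool)),
      (∀ f ∈ A, ∀ g ∈ B, interCard f g < 0 ∨ q ≤ interCard f g) →
      (A.card : ℝ) * B.card ≤
        4 ^ n * Real.exp (-(x ^ 2 / 4 * n + x * (q - L) - 33 / 2 * x ^ 2 * (0 : ℕ))) := by
    intro n hn q A B h
    refine (card_mul_card_le_of_le_interCard hx.le n q A B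
      (fun f hf g hg => by simpa using h f hf g hg)).trans ?_
    refine mul_le_mul_of_nonneg_left (Real.exp_le_exp.2 ?_) (by positivity)
    have := mul_le_mul_of_nonneg_left hn hx.le
    push_cast
    nlinarith
  induction n with
  | zero =>
    intro hn p q A B hpq hqL h
    rcases p with _ | p
    · exact base 0 hn q A B h
    have hA := card_le_two_pow A
    have hB := card_le_two_pow B
    have hqL' : (q : ℝ) ≤ L := by exact_mod_cast hqL
    have h1 : (1 : ℝ) ≤ Real.exp (-(x ^ 2 / 4 * (0 : ℕ) + x * (q - L)
        - 33 / 2 * x ^ 2 * (p + 1 : ℕ))) := by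
      apply Real.one_le_exp
      have e1 : 0 ≤ x * (L - q) := mul_nonneg hx.le (by linarith)
      have e2 : 0 ≤ 33 / 2 * x ^ 2 * (p + 1 : ℕ) := by positivity
      push_cast at e2 ⊢
      linarith
    calc (A.card : ℝ) * B.card ≤ 2 ^ 0 * 2 ^ 0 :=
          mul_le_mul hA hB (by positivity) (by positivity)
      _ ≤ _ := by simpa using h1
  | succ n ih =>
    intro hn p q A B hpq hqL h
    rcases p with _ | p
    · exact base (n + 1) hn q A B h
    obtain ⟨q, rfl⟩ : ∃ q', q = q' + 1 := ⟨q - 1, by omega⟩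
    have hn' : (n : ℝ) * x ≤ 2 * L := by push_cast at hn; linarith
    have hs : ∀ e e' : Bool, ∀ f ∈ slice A e, ∀ g ∈ slice B e',
        (e && e').toNat + interCard f g < p + 1 ∨
          q + 1 ≤ (e && e').toNat + interCard f g := by
      intro e e' f hf g hg
      rw [← interCard_cons]
      exact h _ (mem_slice.1 hf) _ (mem_slice.1 hg)
    have s00 := hs false false
    have s01 := hs false true
    have s10 := hs true false
    have s11 := hs true true
    simp only [Bool.and_true, Bool.and_false, Bool.toNat_false, Bool.toNat_true,
      zero_add] at s00 s01 s10 s11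
    have h1 := ih hn' (p + 1) (q + 1) (slice A false ∪ slice A true) (slice B false) hpq hqL
      (fun f hf g hg => (Finset.mem_union.1 hf).elim (fun hf => s00 f hf g hg)
        (fun hf => s10 f hf g hg))
    have h2 := ih hn' (p + 1) (q + 1) (slice A false) (slice B false ∪ slice B true) hpq hqL
      (fun f hf g hg => (Finset.mem_union.1 hg).elim (fun hg => s00 f hf g hg)
        (fun hg => s01 f hf g hg))
    have h3 := ih hn' p (q + 1) (slice A true) (slice B false ∩ slice B true) (by omega) hqL
      (fun f hf g hg => by
        have e1 := s10 f hf g (Finset.mem_inter.1 hg).1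
        have e2 := s11 f hf g (Finset.mem_inter.1 hg).2
        omega)
    have h4 := ih hn' p (q + 1) (slice A false ∩ slice A true) (slice B true) (by omega) hqL
      (fun f hf g hg => by
        have e1 := s01 f (Finset.mem_inter.1 hf).1 g hg
        have e2 := s11 f (Finset.mem_inter.1 hf).2 g hg
        omega)
    have h5 := ih hn' p q (slice A true) (slice B true) (by omega) (by omega)
      (fun f hf g hg => by
        have e2 := s11 f hf g hg
        omega)
    set M : ℝ := 4 ^ n * Real.exp (-(x ^ 2 / 4 * n + x * ((q + 1 : ℕ) - L)
      - 33 / 2 * x ^ 2 * (p + 1 : ℕ))) with hM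
    have hMpos : 0 < M := by positivity
    have eM : ∀ c : ℝ, Real.exp c * M = 4 ^ n * Real.exp (c + -(x ^ 2 / 4 * n +
        x * ((q + 1 : ℕ) - L) - 33 / 2 * x ^ 2 * (p + 1 : ℕ))) := by
      intro c
      rw [hM, mul_left_comm, ← Real.exp_add]
    have key := step_of_gap (x := x) (M := M)
      (a0 := (slice A false).card) (a1 := (slice A true).card)
      (au := (slice A false ∪ slice A true).card) (ai := (slice A false ∩ slice A true).card)
      (b0 := (slice B false).card) (b1 := (slice B true).card)
      (bu := (slice B false ∪ slice B true).card) (bi := (slice B false ∩ slice B true).card)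
      hx hx' hMpos (by positivity) (by positivity) (by positivity)
      (by exact_mod_cast Finset.card_le_card
            (Finset.inter_subset_left.trans Finset.subset_union_left))
      (by positivity) (by positivity) (by positivity)
      (by exact_mod_cast Finset.card_le_card
            (Finset.inter_subset_left.trans Finset.subset_union_left))
      (by exact_mod_cast Finset.card_union_add_card_inter _ _)
      (by exact_mod_cast Finset.card_union_add_card_inter _ _)
      h1 h2
      (h3.trans (le_of_eq (by rw [eM]; push_cast; ring_nf)))
      (h4.trans (le_of_eq (by rw [eM]; push_cast; ring_nf)))
      (h5.trans (le_of_eq (by rw [eM]; push_cast; ring_nf)))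
    rw [← card_slice_add A, ← card_slice_add B]
    push_cast
    refine key.trans (le_of_eq ?_)
    rw [eM]
    push_cast
    ring_nf

/-! ### Translation into the middle layer -/

/-- The number of `true` coordinates, that is, the size of the subset with indicator `f`. -/
def weight {n : ℕ} (f : Fin n → Bool) : ℕ := (Finset.univ.filter fun i => f i = true).card

lemma hammingDist_add_two_mul_interCard {n : ℕ} (f g : Fin n → Bool) :
    hammingDist f g + 2 * interCard f g = weight f + weight g := by
  simp only [hammingDist, interCard, weight, Finset.card_filter, Finset.mul_sum,
    ← Finset.sum_add_distrib]
  refine Finset.sum_congr rfl fun i _ => ?_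
  cases f i <;> cases g i <;> simp

lemma card_weight_eq (n w : ℕ) :
    (Finset.univ.filter fun f : Fin n → Bool => weight f = w).card = n.choose w := by
  rw [← Finset.card_fin n, ← Finset.card_powersetCard, Finset.card_fin]
  refine Finset.card_bij (fun f _ => Finset.univ.filter fun i => f i = true) ?_ ?_ ?_
  · intro f hf
    exact Finset.mem_powersetCard.2 ⟨Finset.subset_univ _, (Finset.mem_filter.1 hf).2⟩
  · intro f _ g _ h
    funext i
    have := congrArg (fun s => i ∈ s) h
    simp at this
    exact this
  · intro s hs
    refine ⟨fun i => decide (i ∈ s), ?_, ?_⟩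
    · have := (Finset.mem_powersetCard.1 hs).2
      exact Finset.mem_filter.2 ⟨Finset.mem_univ _, by simpa [weight] using this⟩
    · ext i; simp

lemma two_pow_le_mul_choose_half {n : ℕ} (hn : 2 ≤ n) : 2 ^ n ≤ n * n.choose (n / 2) := by
  rcases lt_or_ge n 8 with h | h
  · interval_cases n <;> decide
  obtain ⟨m, rfl | rfl⟩ := n.even_or_odd'
  · have h1 := Nat.four_pow_lt_mul_centralBinom m (by omega)
    rw [Nat.centralBinom, show 4 = 2 ^ 2 by rfl, ← pow_mul] at h1
    rw [Nat.mul_div_cancel_left m two_pos]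
    nlinarith
  · have h1 := Nat.four_pow_lt_mul_centralBinom (m + 1) (by omega)
    -- Pascal's rule: the central coefficient of order `2 m + 2` is twice the middle one here.
    have h2 : (m + 1).centralBinom = 2 * (2 * m + 1).choose m := by
      rw [Nat.centralBinom, show 2 * (m + 1) = (2 * m + 1) + 1 by ring, Nat.choose_succ_succ,
        Nat.choose_symm_half]
      ring
    have h3 : (4 : ℕ) ^ (m + 1) = 2 * 2 ^ (2 * m + 1) := by
      rw [show 4 = 2 ^ 2 by rfl, ← pow_mul]; ring
    rw [h2, h3] at h1
    rw [show (2 * m + 1) / 2 = m by omega]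
    nlinarith

lemma hammingDist_xor {n : ℕ} (c f g : Fin n → Bool) :
    hammingDist (fun i => xor (c i) (f i)) (fun i => xor (c i) (g i)) = hammingDist f g := by
  simp [hammingDist]

/-- Averaging over all translates: some translate of `S` meets the middle layer in at least a
`1 / n` fraction of the size of `S`. -/
lemma exists_translate {n : ℕ} (hn : 2 ≤ n) (S : Finset (Fin n → Bool)) :
    ∃ c : Fin n → Bool, S.card ≤ n * (Finset.univ.filter fun f : Fin n → Bool =>
      (fun i => xor (c i) (f i)) ∈ S ∧ weight f = n / 2).card := by
  by_contra! hc
  have hsum : ∑ c : Fin n → Bool, (Finset.univ.filter fun f : Fin n → Bool =>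
      (fun i => xor (c i) (f i)) ∈ S ∧ weight f = n / 2).card = S.card * n.choose (n / 2) := by
    have inner : ∀ f : Fin n → Bool,
        (Finset.univ.filter fun c : Fin n → Bool => (fun i => xor (c i) (f i)) ∈ S).card
          = S.card := by
      intro f
      refine Finset.card_bij (fun c _ i => xor (c i) (f i)) ?_ ?_ ?_
      · intro c hc; simpa using hc
      · intro c _ c' _ h
        funext i
        simpa using congrFun h i
      · intro y hy
        exact ⟨fun i => xor (y i) (f i), by simpa using hy, by simp⟩
    simp only [Finset.card_filter]
    rw [Finset.sum_comm, ← card_weight_eq, Finset.card_filter, Finset.mul_sum]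
    refine Finset.sum_congr rfl fun f _ => ?_
    by_cases hf : weight f = n / 2
    · simp only [hf, and_true, if_true, mul_one]
      rw [← inner f, Finset.card_filter]
    · simp [hf]
  have hlt : ∑ c : Fin n → Bool, n * (Finset.univ.filter fun f : Fin n → Bool =>
      (fun i => xor (c i) (f i)) ∈ S ∧ weight f = n / 2).card <
      ∑ _c : Fin n → Bool, S.card :=
    Finset.sum_lt_sum_of_nonempty Finset.univ_nonempty fun c _ => hc c
  rw [← Finset.mul_sum, hsum] at hlt
  simp at hlt
  have := Nat.mul_le_mul_left S.card (two_pow_le_mul_choose_half hn)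
  nlinarith

/-! ### The Frankl–Rödl graph -/

/-- Frankl–Rödl: There is `γ₀ > 0` such that for every `0 < γ ≤ γ₀` and every
positive integer `n` for which `(1−γ)n` is an even integer `d`, every independent set `S` of
the Frankl–Rödl graph `FRⁿ_γ` (vertex set `{−1,1}ⁿ`, edges between points at Hamming
distance `d = (1−γ)n`) satisfies `|S| ≤ n (1 − γ²/64)ⁿ 2ⁿ`. -/
theorem stmt_19 :
    ∃ γ₀ : ℝ, 0 < γ₀ ∧
      ∀ γ : ℝ, 0 < γ → γ ≤ γ₀ →
      ∀ n : ℕ, 0 < n →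
      ∀ d : ℕ, Even d → (d : ℝ) = (1 - γ) * n →
      ∀ S : Finset (Fin n → Bool),
        (∀ x ∈ S, ∀ y ∈ S, hammingDist x y ≠ d) →
        (S.card : ℝ) ≤ n * (1 - γ^2/64)^n * 2^n := by
  refine ⟨1 / 100, by norm_num, ?_⟩
  intro γ hγ hγ' n hn d hd hdn S hS
  have hnpos : (0 : ℝ) < n := by exact_mod_cast hn
  have hdlt : d < n := by
    have : (d : ℝ) < n := by nlinarith
    exact_mod_cast this
  have hn2 : 2 ≤ n := by
    by_contra! h
    obtain rfl : n = 1 := by omega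
    obtain rfl : d = 0 := by omega
    norm_num at hdn
    linarith
  obtain ⟨c, hc⟩ := exists_translate hn2 S
  set A := Finset.univ.filter fun f : Fin n → Bool =>
      (fun i => xor (c i) (f i)) ∈ S ∧ weight f = n / 2 with hA
  obtain ⟨k, hk⟩ := hd
  -- The forbidden intersection size inside the middle layer.
  obtain ⟨l, hl⟩ : ∃ l, l + k = n / 2 := ⟨n / 2 - k, by omega⟩
  have hinter : ∀ f ∈ A, ∀ g ∈ A, interCard f g < l ∨ l + 1 ≤ interCard f g := by
    intro f hf g hg
    obtain ⟨-, hf1, hf2⟩ := Finset.mem_filter.1 hf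
    obtain ⟨-, hg1, hg2⟩ := Finset.mem_filter.1 hg
    have h1 := hS _ hf1 _ hg1
    rw [hammingDist_xor] at h1
    have h2 := hammingDist_add_two_mul_interCard f g
    omega
  have hγn : γ * n = n - d := by rw [hdn]; ring
  have hl1 : (n : ℝ) * γ ≤ 2 * (l + 1 : ℕ) := by
    have h : n ≤ d + 2 * (l + 1) := by omega
    have : (n : ℝ) ≤ d + 2 * (l + 1 : ℕ) := by exact_mod_cast h
    linarith
  have hl2 : 2 * (l : ℝ) ≤ γ * n := by
    have h : 2 * l + d ≤ n := by omega
    have : 2 * (l : ℝ) + d ≤ n := by exact_mod_cast h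
    linarith
  have hmain := card_mul_card_le hγ (by linarith) (l + 1) n hl1 l (l + 1) A A (by omega) le_rfl
    hinter
  have hAc : (A.card : ℝ) ≤ 2 ^ n * (1 - γ ^ 2 / 64) ^ n := by
    have hbase : Real.exp (-(γ ^ 2 / 32)) ≤ 1 - γ ^ 2 / 64 := by
      have hy : γ ^ 2 ≤ 1 := by nlinarith
      rw [Real.exp_neg, inv_le_comm₀ (Real.exp_pos _) (by nlinarith)]
      refine le_trans ?_ (Real.add_one_le_exp _)
      rw [inv_le_comm₀ (by nlinarith) (by positivity), inv_eq_one_div,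
        div_le_iff₀ (by positivity)]
      nlinarith [sq_nonneg γ]
    have hsq : (A.card : ℝ) ^ 2 ≤ (2 ^ n * Real.exp (-(γ ^ 2 / 32)) ^ n) ^ 2 := by
      rw [sq (A.card : ℝ)]
      refine hmain.trans ?_
      have e1 : (2 ^ n * Real.exp (-(γ ^ 2 / 32)) ^ n) ^ 2
          = 4 ^ n * Real.exp (-(γ ^ 2 / 16 * n)) := by
        rw [mul_pow, pow_right_comm, ← Real.exp_nat_mul, ← Real.exp_nat_mul]
        norm_num
        ring_nf
      rw [e1]
      refine mul_le_mul_of_nonneg_left (Real.exp_le_exp.2 ?_) (by positivity)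
      have e2 := mul_le_mul_of_nonneg_left hl2 (sq_nonneg γ)
      have e3 : γ ^ 2 * (γ * n) ≤ γ ^ 2 * (1 / 100 * n) := by gcongr
      have e4 : 0 ≤ γ ^ 2 * n := by positivity
      push_cast
      nlinarith
    have := (pow_le_pow_iff_left₀ (by positivity) (by positivity) two_ne_zero).1 hsq
    refine this.trans (mul_le_mul_of_nonneg_left ?_ (by positivity))
    exact pow_le_pow_left₀ (Real.exp_pos _).le hbase n
  calc (S.card : ℝ) ≤ n * A.card := by exact_mod_cast hc
    _ ≤ n * (2 ^ n * (1 - γ ^ 2 / 64) ^ n) := mul_le_mul_of_nonneg_left hAc hnpos.le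
    _ = _ := by ring
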